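/- Let ε, δ > 0 with δ < 1 and let p ∈ (0,1]. Let f be a delay function with flow-counts function F and counts-to-travel-time function τ. Let c ≥ 0 be such that f(x) ≤ (1+δ)·f(0) for all x ∈ [0,c], and assume F(c) ≥ (1/ε)·(1/δ + 1)·log(1/p). Then for every real s ≥ 0, the Laplace measure satisfies μ_ε { z : |τ(s + z) − τ(s)| ≤ (δ/(1−δ))·τ(s) } ≥ 1 − p. -/

import Mathlib

/-!
Put `T = log (1/p) / ε`. The Laplace noise satisfies `|z| ≤ T` with probability
`1 - exp (-ε T) = 1 - p` (`laplaceMeasure_Icc`), so it suffices to prove the error bound,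
in fact with the smaller constant `δ`, for each such `z`. The hypothesis on `c` says
`F c ≥ T / δ + T`.

* If `s ≤ F c - T`, then `s` and `s + z` are both at most `F c`, where `τ` takes values in
  `[f 0, (1 + δ) f 0]`.
* Otherwise `T ≤ δ s`, so the noise is a relative perturbation of `s` by at most `δ`. Since
  `y / τ y = Finv y` is non-decreasing, `τ` changes by at most the factor by which its
  argument does (`mul_travelTime_le`).
-/

open MeasureTheory

/-- The Laplace measure on `ℝ` with mean `0` and scale `1/ε`: the measure with density
`z ↦ (ε/2) * exp (-ε * |z|)` with respect to Lebesgue measure. -/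
noncomputable def laplaceMeasure (ε : ℝ) : Measure ℝ :=
  volume.withDensity (fun z => ENNReal.ofReal (ε / 2 * Real.exp (-ε * |z|)))

/-- The mass that the Laplace measure gives to a symmetric interval. -/
lemma laplaceMeasure_Icc (ε T : ℝ) (hε : 0 < ε) (hT : 0 ≤ T) :
    laplaceMeasure ε (Set.Icc (-T) T) = ENNReal.ofReal (1 - Real.exp (-ε * T)) := by
  have hcont : Continuous fun z : ℝ => ε / 2 * Real.exp (-ε * |z|) := by fun_prop
  have half : ∫ z in (0 : ℝ)..T, ε / 2 * Real.exp (-ε * |z|)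
      = (1 - Real.exp (-ε * T)) / 2 := by
    have h1 : ∫ z in (0 : ℝ)..T, ε / 2 * Real.exp (-ε * |z|)
        = ∫ z in (0 : ℝ)..T, ε / 2 * Real.exp (-ε * z) := by
      apply intervalIntegral.integral_congr
      intro z hz
      rw [Set.uIcc_of_le hT] at hz
      simp only [abs_of_nonneg hz.1]
    have hderiv : ∀ z ∈ Set.uIcc (0 : ℝ) T,
        HasDerivAt (fun z : ℝ => -Real.exp (-ε * z) / 2) (ε / 2 * Real.exp (-ε * z)) z := by
      intro z _
      have h := ((((hasDerivAt_id' z).const_mul (-ε)).exp).neg).div_const 2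
      refine h.congr_deriv ?_
      ring
    rw [h1, intervalIntegral.integral_eq_sub_of_hasDerivAt hderiv
      (by apply Continuous.intervalIntegrable; fun_prop)]
    simp
    ring
  have left : ∫ z in (-T)..0, ε / 2 * Real.exp (-ε * |z|)
      = (1 - Real.exp (-ε * T)) / 2 := by
    rw [← half]
    have h := intervalIntegral.integral_comp_neg (a := 0) (b := T)
      (fun z : ℝ => ε / 2 * Real.exp (-ε * |z|))
    simp only [abs_neg, neg_zero] at h
    exact h.symm
  rw [laplaceMeasure, withDensity_apply _ measurableSet_Icc,
    ← ofReal_integral_eq_lintegral_ofReal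
      (hcont.continuousOn.integrableOn_compact isCompact_Icc)
      (Filter.Eventually.of_forall fun z => by positivity),
    integral_Icc_eq_integral_Ioc, ← intervalIntegral.integral_of_le (by linarith),
    ← intervalIntegral.integral_add_adjacent_intervals
      (hcont.intervalIntegrable (-T) 0) (hcont.intervalIntegrable 0 T), left, half]
  congr 1
  ring

/-- A right inverse of `x ↦ x * f x` on `[0, ∞)` is monotone there, since `x ↦ x * f x` is
strictly increasing. -/
lemma flowCounts_inv_mono (f Finv : ℝ → ℝ)
    (hfpos : ∀ x, 0 ≤ x → 0 < f x)
    (hfmono : ∀ x y, 0 ≤ x → x ≤ y → f x ≤ f y)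
    (hFinv_nonneg : ∀ y, 0 ≤ y → 0 ≤ Finv y)
    (hFinv_right : ∀ y, 0 ≤ y → Finv y * f (Finv y) = y)
    {a b : ℝ} (ha : 0 ≤ a) (hab : a ≤ b) : Finv a ≤ Finv b := by
  by_contra! h
  have hb := ha.trans hab
  have hb0 := hFinv_nonneg b hb
  have h1 := hfmono _ _ hb0 h.le
  have h2 : Finv b * f (Finv b) < Finv a * f (Finv a) :=
    mul_lt_mul h h1 (hfpos _ hb0) (hb0.trans h.le)
  rw [hFinv_right a ha, hFinv_right b hb] at h2
  linarith

/-- The ratio `y / τ y` is non-decreasing, with the division cleared. -/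
lemma mul_travelTime_le (f Finv : ℝ → ℝ)
    (hfpos : ∀ x, 0 ≤ x → 0 < f x)
    (hfmono : ∀ x y, 0 ≤ x → x ≤ y → f x ≤ f y)
    (hFinv_nonneg : ∀ y, 0 ≤ y → 0 ≤ Finv y)
    (hFinv_right : ∀ y, 0 ≤ y → Finv y * f (Finv y) = y)
    {a b : ℝ} (ha : 0 ≤ a) (hab : a ≤ b) : a * f (Finv b) ≤ b * f (Finv a) := by
  have hb := ha.trans hab
  have hm := flowCounts_inv_mono f Finv hfpos hfmono hFinv_nonneg hFinv_right ha hab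
  have hpa := hfpos _ (hFinv_nonneg a ha)
  have hpb := hfpos _ (hFinv_nonneg b hb)
  calc a * f (Finv b) = Finv a * (f (Finv a) * f (Finv b)) := by
        rw [← mul_assoc, hFinv_right a ha]
    _ ≤ Finv b * (f (Finv a) * f (Finv b)) := by gcongr
    _ = b * f (Finv a) := by
        rw [mul_comm (f (Finv a)), ← mul_assoc, hFinv_right b hb]

/-- **Theorem 1 (Accuracy of Travel Time Estimates).**
If `f` is a delay function (positive, non-decreasing, differentiable on `[0,∞)`) with
flow-counts function `F x = x * f x` (with inverse `Finv`) and counts-to-travel-time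
function `τ`, if `c` is at most the `δ`-capacity (i.e. `f x ≤ (1+δ) f 0` on `[0,c]`)
and the `δ`-critical count satisfies `(1+δ) * c * f 0 ≥ (1/ε) * (1/δ + 1) * log (1/p)`,
then for every traffic count `s ≥ 0`, with probability at least `1 - p` over Laplace
noise `z` we have `|τ (s + z) - τ s| ≤ (δ/(1-δ)) * τ s`. -/
theorem travel_time_accuracy_lemma
    (ε δ p : ℝ) (hε : 0 < ε) (hδ : 0 < δ) (hδ1 : δ < 1) (hp : 0 < p) (hp1 : p ≤ 1)
    (f : ℝ → ℝ)
    (hfpos : ∀ x, 0 ≤ x → 0 < f x)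
    (hfmono : ∀ x y, 0 ≤ x → x ≤ y → f x ≤ f y)
    (hfdiff : DifferentiableOn ℝ f (Set.Ici 0))
    (Finv : ℝ → ℝ)
    (hFinv_nonneg : ∀ y, 0 ≤ y → 0 ≤ Finv y)
    (hFinv_left : ∀ x, 0 ≤ x → Finv (x * f x) = x)
    (hFinv_right : ∀ y, 0 ≤ y → Finv y * f (Finv y) = y)
    (τ : ℝ → ℝ)
    (hτ : ∀ y, τ y = if 0 ≤ y then f (Finv y) else f 0)
    (c : ℝ) (hc : 0 ≤ c)
    (hcap : ∀ x, 0 ≤ x → x ≤ c → f x ≤ (1 + δ) * f 0)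
    (hcrit : c * f c ≥ (1 / ε) * (1 / δ + 1) * Real.log (1 / p))
    (s : ℝ) (hs : 0 ≤ s) :
    laplaceMeasure ε {z : ℝ | |τ (s + z) - τ s| ≤ δ / (1 - δ) * τ s} ≥
      ENNReal.ofReal (1 - p) := by
  obtain ⟨T, hTdef⟩ : ∃ T, T = Real.log (1 / p) / ε := ⟨_, rfl⟩
  have hT : 0 ≤ T := by
    rw [hTdef]
    exact div_nonneg (Real.log_nonneg (by rw [le_div_iff₀ hp]; linarith)) hε.le
  have hexp : Real.exp (-ε * T) = p := by
    have h : -ε * T = Real.log p := by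
      rw [hTdef, one_div, Real.log_inv]
      field_simp
    rw [h, Real.exp_log hp]
  have hcrit' : T / δ + T ≤ c * f c := by
    have h : (1 / ε) * (1 / δ + 1) * Real.log (1 / p) = T / δ + T := by
      rw [hTdef]
      ring
    linarith
  have hf0 : 0 < f 0 := hfpos 0 le_rfl
  have hτ_nonneg : ∀ y, 0 ≤ y → τ y = f (Finv y) := fun y hy => by rw [hτ, if_pos hy]
  have hτ_ge : ∀ y, f 0 ≤ τ y := by
    intro y
    rw [hτ]
    split_ifs with hy
    · exact hfmono _ _ le_rfl (hFinv_nonneg y hy)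
    · exact le_rfl
  have hτ_le : ∀ y, y ≤ c * f c → τ y ≤ (1 + δ) * f 0 := by
    intro y hyc
    rw [hτ]
    split_ifs with hy
    · refine hcap _ (hFinv_nonneg y hy) ?_
      rw [← hFinv_left c hc]
      exact flowCounts_inv_mono f Finv hfpos hfmono hFinv_nonneg hFinv_right hy hyc
    · exact hcap 0 le_rfl hc
  have key : ∀ z ∈ Set.Icc (-T) T, |τ (s + z) - τ s| ≤ δ * τ s := by
    rintro z ⟨hz1, hz2⟩
    have hτs := hτ_ge s
    have hτy := hτ_ge (s + z)
    by_cases hsc : s ≤ c * f c - T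
    · have h1 := hτ_le s (by linarith)
      have h2 := hτ_le (s + z) (by linarith)
      have h3 : δ * f 0 ≤ δ * τ s := by gcongr
      rw [abs_le]
      constructor <;> linarith
    · have hTs : T < δ * s := by
        have h : T / δ < s := by linarith
        rwa [div_lt_iff₀' hδ] at h
      have hspos : 0 < s := by nlinarith
      have hy : 0 ≤ s + z := by nlinarith
      have hmono : ∀ a b, 0 ≤ a → a ≤ b → τ a ≤ τ b := by
        intro a b ha hab
        rw [hτ_nonneg a ha, hτ_nonneg b (ha.trans hab)]
        exact hfmono _ _ (hFinv_nonneg a ha)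
          (flowCounts_inv_mono f Finv hfpos hfmono hFinv_nonneg hFinv_right ha hab)
      have hratio : ∀ a b, 0 ≤ a → a ≤ b → a * τ b ≤ b * τ a := by
        intro a b ha hab
        rw [hτ_nonneg a ha, hτ_nonneg b (ha.trans hab)]
        exact mul_travelTime_le f Finv hfpos hfmono hFinv_nonneg hFinv_right ha hab
      have hτs0 : 0 < τ s := by linarith
      rcases le_total 0 z with hz | hz
      · have h1 := hmono s (s + z) hs (by linarith)
        have h2 := hratio s (s + z) hs (by linarith)
        rw [abs_of_nonneg (by linarith)]
        refine le_of_mul_le_mul_left ?_ hspos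
        have h3 : z * τ s ≤ δ * s * τ s := by gcongr; linarith
        nlinarith
      · have h1 := hmono (s + z) s hy (by linarith)
        have h2 := hratio (s + z) s hy (by linarith)
        rw [abs_of_nonpos (by linarith)]
        refine le_of_mul_le_mul_left ?_ hspos
        have h3 : -z * τ s ≤ δ * s * τ s := by gcongr; linarith
        nlinarith
  rw [ge_iff_le, ← hexp, ← laplaceMeasure_Icc ε T hε hT]
  refine measure_mono fun z hz => (key z hz).trans ?_
  have hδle : δ ≤ δ / (1 - δ) := by
    rw [le_div_iff₀ (by linarith)]
    nlinarith
  exact mul_le_mul_of_nonneg_right hδle (hf0.le.trans (hτ_ge s))
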